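/- Let Ω be a finite nonempty set and t ∈ [1/2, 1) a rational number, written t = p/(p+q) with p, q positive integers. A selection function σ on Ω is represented for threshold t by some regular probability measure on Ω if and only if σ satisfies (S1), (S2), (S3), (S4ₙ) for every n ≥ 1, and the axiom (Scott[t]): whenever sequences (A_i)_{i≤n}, (B_i)_{i≤n} of subsets of Ω are t-balanced and A_i ⪰*_σ B_i for all i < n, then it is not the case that A_n = {a} for some a with a ≻_σ B_n. -/

import Mathlib

open Finset

variable {Ω : Type*}

/-- The measure of a finite set of states given weights `w`: `μ(A) = ∑_{ω ∈ A} w ω`. -/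
noncomputable def mea (w : Ω → ℝ) (A : Finset Ω) : ℝ := ∑ ω ∈ A, w ω

/-- `w` is a probability weight function: nonnegative and summing to 1. -/
def IsProbWeight [Fintype Ω] (w : Ω → ℝ) : Prop :=
  (∀ ω, 0 ≤ w ω) ∧ (∑ ω, w ω) = 1

/-- The measure is regular: only the empty set has measure 0. -/
def RegularW (w : Ω → ℝ) : Prop := ∀ X : Finset Ω, mea w X = 0 → X = ∅

/-- Conditional measure `μ_A(X) = μ(A ∩ X) / μ(A)`. -/
noncomputable def condMea [DecidableEq Ω] (w : Ω → ℝ) (A X : Finset Ω) : ℝ := mea w (A ∩ X) / mea w A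

/-- `X` is `(m,t)`-stable for a set function `m`: `X` is nonempty and for every `E` with
`X ∩ E ≠ ∅` and `m E > 0`, `m (X ∩ E) / m E > t`. -/
def StableFor [DecidableEq Ω] (m : Finset Ω → ℝ) (t : ℝ) (X : Finset Ω) : Prop :=
  X.Nonempty ∧ ∀ E : Finset Ω, (X ∩ E).Nonempty → 0 < m E → t < m (X ∩ E) / m E

/-- `S` is the `⊆`-least `(m,t)`-stable set. -/
def IsLeastStable [DecidableEq Ω] (m : Finset Ω → ℝ) (t : ℝ) (S : Finset Ω) : Prop :=
  StableFor m t S ∧ ∀ X : Finset Ω, StableFor m t X → S ⊆ X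

/-- `w` represents the selection function `σ` for threshold `t`. -/
def RepresentsAt [DecidableEq Ω] (w : Ω → ℝ) (t : ℝ) (σ : Finset Ω → Finset Ω) : Prop :=
  ∀ E : Finset Ω, (0 < mea w E → IsLeastStable (condMea w E) t (σ E)) ∧
    (mea w E = 0 → σ E = ∅)

/-- Selection axiom (S1): `σ(X) = ∅` only if `X = ∅`. -/
def SelA1 (σ : Finset Ω → Finset Ω) : Prop := ∀ X : Finset Ω, σ X = ∅ → X = ∅

/-- Selection axiom (S2): `σ(X) ⊆ X`. -/
def SelA2 (σ : Finset Ω → Finset Ω) : Prop := ∀ X : Finset Ω, σ X ⊆ X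

/-- Selection axiom (S3): if `σ(A) ∩ B ≠ ∅` then `σ(A ∩ B) ⊆ σ(A) ∩ B`. -/
def SelA3 [DecidableEq Ω] (σ : Finset Ω → Finset Ω) : Prop :=
  ∀ A B : Finset Ω, (σ A ∩ B).Nonempty → σ (A ∩ B) ⊆ σ A ∩ B

/-- Selection axiom (S4ₙ) for every `n`: if `σ(A ∪ Xᵢ) = Xᵢ` for all `i`, then
`σ(A ∪ ⋃ᵢ Xᵢ) ⊆ ⋃ᵢ Xᵢ`. -/
def SelA4 [DecidableEq Ω] (σ : Finset Ω → Finset Ω) : Prop :=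
  ∀ n : ℕ, ∀ A : Finset Ω, ∀ X : Fin (n + 1) → Finset Ω,
    (∀ i, σ (A ∪ X i) = X i) →
    σ (A ∪ univ.biUnion X) ⊆ univ.biUnion X

/-- `ω ≻_σ X` iff `ω ∉ X` and `σ (X ∪ {ω}) = {ω}`. -/
def succS [DecidableEq Ω] (σ : Finset Ω → Finset Ω) (ω : Ω) (X : Finset Ω) : Prop :=
  ω ∉ X ∧ σ (X ∪ {ω}) = {ω}

/-- `X ⪰_σ ω` iff `ω ∈ X` or `σ (X ∪ {ω}) ≠ {ω}`. -/
def succeqS [DecidableEq Ω] (σ : Finset Ω → Finset Ω) (X : Finset Ω) (ω : Ω) : Prop :=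
  ω ∈ X ∨ σ (X ∪ {ω}) ≠ {ω}

/-- `A ⪰*_σ B` iff either `A` is a singleton `{a}` with `a ≻_σ B`, or `B` is a singleton
`{b}` with `A ⪰_σ b`. -/
def geStar [DecidableEq Ω] (σ : Finset Ω → Finset Ω) (A B : Finset Ω) : Prop :=
  (∃ a, A = {a} ∧ succS σ a B) ∨ (∃ b, B = {b} ∧ succeqS σ A b)

/-- Two sequences of sets are balanced: every state occurs in exactly as many `A i`'s
as `B i`'s. -/
def BalancedSeq {n : ℕ} (A B : Fin n → Finset Ω) : Prop :=
  ∀ ω : Ω, Nat.card {i // ω ∈ A i} = Nat.card {i // ω ∈ B i}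

/-- `(A_i) ≤₀ (B_i)`: every state occurs in at most as many `A i`'s as `B i`'s. -/
def DomSeq {n : ℕ} (A B : Fin n → Finset Ω) : Prop :=
  ∀ ω : Ω, Nat.card {i // ω ∈ A i} ≤ Nat.card {i // ω ∈ B i}

/-- The (Scott) axiom for the induced order `⪰*_σ`. -/
def ScottAx [DecidableEq Ω] (σ : Finset Ω → Finset Ω) : Prop :=
  ∀ n : ℕ, ∀ A B : Fin (n + 1) → Finset Ω, BalancedSeq A B →
    (∀ i, geStar σ (A i) (B i)) → ∀ i, geStar σ (B i) (A i)

/-- Index classification for `t`-balancedness: index data `(A, B)` is *strict* when `A` is a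
singleton `{a}` with `a ≻_σ B`. -/
def StrictIdx [DecidableEq Ω] (σ : Finset Ω → Finset Ω) (A B : Finset Ω) : Prop :=
  ∃ a, A = {a} ∧ succS σ a B

/-- Index data `(A, B)` is *weak* when it is not strict and `B` is a singleton `{b}` with
`A ⪰_σ b`. -/
def WeakIdx [DecidableEq Ω] (σ : Finset Ω → Finset Ω) (A B : Finset Ω) : Prop :=
  ¬ StrictIdx σ A B ∧ ∃ b, B = {b} ∧ succeqS σ A b

/-- `t`-balancedness of two sequences of events, for `t = p / (p + q)`. -/
def TBalanced [DecidableEq Ω] (σ : Finset Ω → Finset Ω) (p q : ℕ) {n : ℕ}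
    (A B : Fin n → Finset Ω) : Prop :=
  ∀ ω : Ω,
    q * Nat.card {i // ω ∈ A i ∧ StrictIdx σ (A i) (B i)} +
        p * Nat.card {i // ω ∈ A i ∧ WeakIdx σ (A i) (B i)} =
      p * Nat.card {i // ω ∈ B i ∧ StrictIdx σ (A i) (B i)} +
        q * Nat.card {i // ω ∈ B i ∧ WeakIdx σ (A i) (B i)}

/-!
For positive weights, a subset of `E` is `(μ_E, t)`-stable iff each of its points outweighs its
complement in `E`, and every stable set is contained in `E` or contains it. Hence `μ` represents
`σ` iff `σ E` is the least such subset of each `E`. Given (S1)-(S4ₙ), this holds as soon as the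
induced order is the right one, i.e. `a ≻_σ B` exactly when `a` outweighs `B`.

For `t = p / (p + q)`, correctness of the order is a finite homogeneous system of strict and weak
linear inequalities with integer coefficients in the unknown weights. By Motzkin's transposition
theorem over `ℚ`, it is solvable unless some combination of its inequalities with natural number
coefficients vanishes identically while using a strict one. Listing each inequality as often as
its coefficient says, with that strict one last, turns such a combination into a pair of
`t`-balanced sequences violating (Scott[t]). Positivity of the solution comes from the
inequalities `{a} ≻ ∅`, and it can be normalized because the system is homogeneous.
-/

section Farkas

variable {K W : Type*} [Field K] [LinearOrder K] [IsStrictOrderedRing K] [AddCommGroup W]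
  [Module K W]

/- Adding a functional `f` to `s` reduces, when `s` alone does not suffice on `V`, to `s` on
`V ⊓ ker f`: this is why the claim is relative to a subspace. -/
theorem exists_mem_hull_eqOn_of_forall_nonneg (s : Finset (Module.Dual K W))
    (b : Module.Dual K W) (V : Submodule K W)
    (h : ∀ x ∈ V, (∀ f ∈ s, 0 ≤ f x) → 0 ≤ b x) :
    ∃ g ∈ PointedCone.hull K (s : Set (Module.Dual K W)), Set.EqOn b g V := by
  classical
  induction s using Finset.induction_on generalizing V with
  | empty =>
    refine ⟨0, zero_mem _, fun x hx ↦ le_antisymm ?_ (h x hx (by simp))⟩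
    simpa using h (-x) (V.neg_mem hx) (by simp)
  | insert f s _ ih =>
    have hull_le : PointedCone.hull K (s : Set (Module.Dual K W)) ≤
        PointedCone.hull K (insert f s : Finset (Module.Dual K W)) :=
      Submodule.span_mono (by simp)
    by_cases hs : ∀ x ∈ V, (∀ f ∈ s, 0 ≤ f x) → 0 ≤ b x
    · obtain ⟨g, hg, hbg⟩ := ih V hs
      exact ⟨g, hull_le hg, hbg⟩
    push Not at hs
    obtain ⟨y, hyV, hys, hby⟩ := hs
    have hfy : f y < 0 := by
      by_contra! hfy
      exact hby.not_ge (h y hyV (forall_mem_insert .. |>.2 ⟨hfy, hys⟩))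
    obtain ⟨g, hg, hbg⟩ := ih (V ⊓ f.ker) fun x hx hxs ↦
      h x hx.1 (forall_mem_insert .. |>.2 ⟨(LinearMap.mem_ker.1 hx.2).ge, hxs⟩)
    have hs_dual : PointedCone.hull K (s : Set (Module.Dual K W)) ≤
        PointedCone.dual (Module.Dual.eval K W) {y} :=
      Submodule.span_le.2 fun f hf ↦ by simpa using hys f hf
    have hgy : 0 ≤ g y := hs_dual hg rfl
    let d : K := (b y - g y) / f y
    have hd : 0 ≤ d := div_nonneg_of_nonpos (by linarith) hfy.le
    refine ⟨g + d • f, add_mem (hull_le hg) (PointedCone.smul_mem _ hd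
      (PointedCone.subset_hull (by simp))), fun x hx ↦ ?_⟩
    have hproj : x - (f x / f y) • y ∈ V ⊓ f.ker :=
      ⟨V.sub_mem hx (V.smul_mem _ hyV), by simp [hfy.ne]⟩
    have hxy : b x - f x / f y * b y = g x - f x / f y * g y := by simpa using hbg hproj
    calc b x = g x + f x / f y * (b y - g y) := by linear_combination hxy
      _ = (g + d • f) x := by
        simp only [d, LinearMap.add_apply, LinearMap.smul_apply, smul_eq_mul]; ring

theorem mem_hull_range_of_forall_nonneg {ι : Type*} [Finite ι] {f : ι → Module.Dual K W}
    {b : Module.Dual K W} (h : ∀ x, (∀ i, 0 ≤ f i x) → 0 ≤ b x) :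
    b ∈ PointedCone.hull K (Set.range f) := by
  obtain ⟨g, hg, hbg⟩ := exists_mem_hull_eqOn_of_forall_nonneg (Set.finite_range f).toFinset b ⊤
    fun x _ hx ↦ h x fun i ↦ hx (f i) (by simp)
  have : b = g := LinearMap.ext fun x ↦ hbg (Submodule.mem_top (x := x))
  simpa [this] using hg

theorem exists_forall_nonneg_and_pos {ι : Type*} [Finite ι] {f : ι → Module.Dual K W}
    {S : Set ι} (h : ∀ i ∈ S, -f i ∉ PointedCone.hull K (Set.range f)) :
    ∃ x, (∀ i, 0 ≤ f i x) ∧ ∀ i ∈ S, 0 < f i x := by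
  have hex : ∀ i : S, ∃ x, (∀ j, 0 ≤ f j x) ∧ 0 < f i x := by
    intro i
    have := mt mem_hull_range_of_forall_nonneg (h i i.2)
    push Not at this
    simpa using this
  choose x hx hpos using hex
  cases nonempty_fintype S
  refine ⟨∑ i, x i, fun j ↦ ?_, fun j hj ↦ ?_⟩
  · rw [map_sum]
    exact sum_nonneg fun i _ ↦ hx i j
  · rw [map_sum]
    exact sum_pos' (fun i _ ↦ hx i j) ⟨⟨j, hj⟩, mem_univ _, hpos ⟨j, hj⟩⟩

end Farkas

section Integral

variable {ι : Type*}

theorem exists_pos_natCast_eq_mul [Finite ι] (c : ι → ℚ≥0) :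
    ∃ D : ℕ, 0 < D ∧ ∃ m : ι → ℕ, ∀ i, (m i : ℚ≥0) = D * c i := by
  cases nonempty_fintype ι
  refine ⟨∏ i, (c i).den, prod_pos fun i _ ↦ (c i).den_pos,
    fun i ↦ (∏ j, (c j).den) / (c i).den * (c i).num, fun i ↦ ?_⟩
  obtain ⟨k, hk⟩ := dvd_prod_of_mem (fun j ↦ (c j).den) (mem_univ i)
  dsimp only
  rw [hk, Nat.mul_div_cancel_left _ (c i).den_pos]
  push_cast
  rw [mul_right_comm, NNRat.den_mul_eq_num, mul_comm]

theorem exists_sum_nsmul_eq_zero_of_neg_mem_hull [Fintype ι] {M : Type*} [AddCommGroup M]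
    [Module ℚ M] {v : ι → M} {i : ι} (h : -v i ∈ PointedCone.hull ℚ (Set.range v)) :
    ∃ m : ι → ℕ, 0 < m i ∧ ∑ j, m j • v j = 0 := by
  classical
  obtain ⟨c : ι → ℚ≥0, hc⟩ := (Submodule.mem_span_range_iff_exists_fun _).1 h
  replace hc : ∑ j, (c j : ℚ) • v j = -v i := hc
  obtain ⟨D, hD, m, hm⟩ := exists_pos_natCast_eq_mul c
  have hmv (j) : m j • v j = D • (c j : ℚ) • v j := by
    have hmj : (m j : ℚ) = D * (c j : ℚ) := mod_cast hm j
    rw [← Nat.cast_smul_eq_nsmul ℚ, hmj, mul_smul, Nat.cast_smul_eq_nsmul]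
  refine ⟨m + Pi.single i D, by simp [hD], ?_⟩
  simp [add_smul, sum_add_distrib, hmv, ← smul_sum, hc, Pi.single_apply, ite_smul]

theorem exists_forall_sum_nonneg_and_pos [Fintype ι] [Fintype Ω] {v : ι → Ω → ℤ} {S : Set ι}
    (h : ∀ m : ι → ℕ, ∑ i, m i • v i = 0 → ∀ i ∈ S, m i = 0) :
    ∃ w : Ω → ℚ, (∀ i, 0 ≤ ∑ ω, v i ω * w ω) ∧ ∀ i ∈ S, 0 < ∑ ω, v i ω * w ω := by
  classical
  let f (i : ι) : Module.Dual ℚ (Ω → ℚ) := dotProductEquiv ℚ Ω fun ω ↦ v i ω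
  refine exists_forall_nonneg_and_pos (f := f) fun i hi hmem ↦ ?_
  obtain ⟨m, hmi, hm⟩ := exists_sum_nsmul_eq_zero_of_neg_mem_hull hmem
  refine hmi.ne' (h m (funext fun ω ↦ ?_) i hi)
  have := LinearMap.congr_fun hm (Pi.single ω 1)
  have hω : ∑ j, (m j : ℚ) * v j ω = 0 := by simpa [f, LinearMap.sum_apply] using this
  simpa using mod_cast hω

theorem exists_fin_map_univ_eq_of_mem {α : Type*} {T : Multiset α} {a : α} (ha : a ∈ T) :
    ∃ (n : ℕ) (s : Fin (n + 1) → α), s (Fin.last n) = a ∧ univ.val.map s = T := by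
  obtain ⟨T', rfl⟩ := Multiset.exists_cons_of_mem ha
  induction T' using Quotient.inductionOn with | _ l
  refine ⟨l.length, Fin.snoc l.get a, by simp, ?_⟩
  simp [Fin.univ_castSuccEmb, Function.comp_def]

theorem exists_fin_sum_comp_eq_sum_nsmul [Fintype ι] {M : Type*} [AddCommMonoid M] (f : ι → M)
    {m : ι → ℕ} {i : ι} (hi : m i ≠ 0) :
    ∃ (n : ℕ) (s : Fin (n + 1) → ι), s (Fin.last n) = i ∧ ∑ k, f (s k) = ∑ j, m j • f j := by
  have hmem : i ∈ ∑ j, m j • ({j} : Multiset ι) :=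
    Multiset.mem_sum.2 ⟨i, mem_univ i, by simp [Multiset.mem_nsmul, hi]⟩
  obtain ⟨n, s, hlast, hs⟩ := exists_fin_map_univ_eq_of_mem hmem
  let sumMap : Multiset ι →+ M := Multiset.sumAddMonoidHom.comp (Multiset.mapAddMonoidHom f)
  refine ⟨n, s, hlast, ?_⟩
  calc ∑ k, f (s k) = sumMap (univ.val.map s) :=
        (congrArg Multiset.sum (Multiset.map_map f s _)).symm
    _ = ∑ j, m j • f j := by
        rw [hs, map_sum]
        exact sum_congr rfl fun j _ ↦ by simp only [map_nsmul]; simp [sumMap]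

end Integral

section Measure

variable {w : Ω → ℝ}

@[simp]
theorem mea_empty (w : Ω → ℝ) : mea w ∅ = 0 := sum_empty

@[simp]
theorem mea_singleton (w : Ω → ℝ) (a : Ω) : mea w {a} = w a := sum_singleton w a

theorem mea_nonneg (hw : ∀ ω, 0 ≤ w ω) (X : Finset Ω) : 0 ≤ mea w X :=
  sum_nonneg fun ω _ ↦ hw ω

theorem mea_mono (hw : ∀ ω, 0 ≤ w ω) {X Y : Finset Ω} (h : X ⊆ Y) : mea w X ≤ mea w Y :=
  sum_le_sum_of_subset_of_nonneg h fun ω _ _ ↦ hw ω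

theorem le_mea (hw : ∀ ω, 0 ≤ w ω) {X : Finset Ω} {a : Ω} (ha : a ∈ X) : w a ≤ mea w X :=
  single_le_sum (fun ω _ ↦ hw ω) ha

theorem mea_pos (hw : ∀ ω, 0 < w ω) {X : Finset Ω} (h : X.Nonempty) : 0 < mea w X :=
  sum_pos (fun ω _ ↦ hw ω) h

theorem mea_pos_iff (hw : ∀ ω, 0 < w ω) {X : Finset Ω} : 0 < mea w X ↔ X.Nonempty := by
  refine ⟨fun h ↦ ?_, mea_pos hw⟩
  rw [nonempty_iff_ne_empty]
  rintro rfl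
  simp at h

theorem mea_eq_zero_iff (hw : ∀ ω, 0 < w ω) {X : Finset Ω} : mea w X = 0 ↔ X = ∅ := by
  rw [← not_nonempty_iff_eq_empty, ← mea_pos_iff hw, not_lt]
  exact ⟨le_of_eq, fun h ↦ h.antisymm (mea_nonneg (fun ω ↦ (hw ω).le) X)⟩

theorem regularW_iff_forall_pos (hw : ∀ ω, 0 ≤ w ω) : RegularW w ↔ ∀ ω, 0 < w ω := by
  refine ⟨fun h ω ↦ (hw ω).lt_of_ne fun hω ↦ ?_, fun h X ↦ (mea_eq_zero_iff h).1⟩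
  simpa using h {ω} (by simp [← hω])

theorem mea_inter_eq_add_of_subset [DecidableEq Ω] (w : Ω → ℝ) {E X : Finset Ω} (h : X ⊆ E)
    (F : Finset Ω) : mea w (E ∩ F) = mea w (X ∩ F) + mea w ((E \ X) ∩ F) := by
  have hdiff : (E ∩ F) \ (X ∩ F) = (E \ X) ∩ F := by grind
  rw [add_comm, ← hdiff]
  exact (sum_sdiff (inter_subset_inter_right h)).symm

theorem condMea_inter_div_condMea [DecidableEq Ω] {E X : Finset Ω} (hE : mea w E ≠ 0)
    (h : X ⊆ E) (F : Finset Ω) :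
    condMea w E (X ∩ F) / condMea w E F =
      mea w (X ∩ F) / (mea w (X ∩ F) + mea w ((E \ X) ∩ F)) := by
  rw [condMea, condMea, div_div_div_cancel_right₀ hE, ← inter_assoc, inter_eq_right.2 h,
    mea_inter_eq_add_of_subset w h]

end Measure

section Stable

variable {w : Ω → ℝ} {t : ℝ}

/-- `a` outweighs `B`: for `a ∉ B` this says `μ({a}) / μ(B ∪ {a}) > t`, with the denominator
cleared. It is the comparison that the induced order `≻_σ` must match. -/
def Outweighs (w : Ω → ℝ) (t : ℝ) (a : Ω) (B : Finset Ω) : Prop := t * mea w B < (1 - t) * w a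

theorem Outweighs.anti (hw : ∀ ω, 0 ≤ w ω) (ht : 0 ≤ t) {a : Ω} {B C : Finset Ω}
    (h : Outweighs w t a B) (hCB : C ⊆ B) : Outweighs w t a C :=
  (mul_le_mul_of_nonneg_left (mea_mono hw hCB) ht).trans_lt h

theorem lt_div_add_iff {a b : ℝ} (h : 0 < a + b) : t < a / (a + b) ↔ t * b < (1 - t) * a := by
  rw [lt_div_iff₀ h]
  constructor <;> intro h <;> linarith

theorem outweighs_div_add_iff {p q : ℝ} (hpq : 0 < p + q) {a : Ω} {B : Finset Ω} :
    Outweighs w (p / (p + q)) a B ↔ p * mea w B < q * w a := by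
  have hsub : 1 - p / (p + q) = q / (p + q) := by field_simp; ring
  rw [Outweighs, hsub, div_mul_eq_mul_div, div_mul_eq_mul_div, div_lt_div_iff_of_pos_right hpq]

variable [DecidableEq Ω]

/-- `X` is a nonempty subset of `E` each of whose elements outweighs `E \ X`. These are the
`(μ_E, t)`-stable subsets of `E`. -/
structure IsPointwiseStable (w : Ω → ℝ) (t : ℝ) (E X : Finset Ω) : Prop where
  subset : X ⊆ E
  nonempty : X.Nonempty
  outweighs : ∀ x ∈ X, Outweighs w t x (E \ X)

theorem isPointwiseStable_self (hw : ∀ ω, 0 < w ω) (ht : t < 1) {E : Finset Ω}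
    (hE : E.Nonempty) : IsPointwiseStable w t E E :=
  ⟨Subset.rfl, hE, fun x _ ↦ by simpa [Outweighs] using mul_pos (sub_pos.2 ht) (hw x)⟩

theorem isPointwiseStable_singleton_iff {a : Ω} {B : Finset Ω} (ha : a ∉ B) :
    IsPointwiseStable w t (B ∪ {a}) {a} ↔ Outweighs w t a B := by
  have hdiff : (B ∪ {a}) \ {a} = B := union_sdiff_cancel_right (disjoint_singleton_right.2 ha)
  refine ⟨fun h ↦ hdiff ▸ h.outweighs a (mem_singleton_self a), fun h ↦ ?_⟩
  exact ⟨subset_union_right, singleton_nonempty a, fun x hx ↦ by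
    rwa [hdiff, mem_singleton.1 hx]⟩

theorem StableFor.isPointwiseStable (hw : ∀ ω, 0 < w ω) {E X : Finset Ω} (hX : X ⊆ E)
    (h : StableFor (condMea w E) t X) : IsPointwiseStable w t E X := by
  have hE : 0 < mea w E := mea_pos hw (h.1.mono hX)
  refine ⟨hX, h.1, fun x hx ↦ ?_⟩
  have hXF : X ∩ insert x (E \ X) = {x} := by grind
  have hEF : (E \ X) ∩ insert x (E \ X) = E \ X := inter_eq_left.2 (subset_insert x _)
  have hcond : 0 < condMea w E (insert x (E \ X)) :=
    div_pos (mea_pos hw ⟨x, by simp [hX hx]⟩) hE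
  have hlt := h.2 (insert x (E \ X)) (by simp [hXF]) hcond
  rwa [condMea_inter_div_condMea hE.ne' hX, hXF, hEF, mea_singleton, lt_div_add_iff
    (add_pos_of_pos_of_nonneg (hw x) (mea_nonneg (fun ω ↦ (hw ω).le) _))] at hlt

theorem IsPointwiseStable.stableFor (hw : ∀ ω, 0 < w ω) (ht₀ : 0 ≤ t) (ht₁ : t ≤ 1)
    {E X : Finset Ω} (h : IsPointwiseStable w t E X) : StableFor (condMea w E) t X := by
  have hw' : ∀ ω, 0 ≤ w ω := fun ω ↦ (hw ω).le
  refine ⟨h.nonempty, fun F hF _ ↦ ?_⟩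
  obtain ⟨x, hx⟩ := hF
  have hE : 0 < mea w E := mea_pos hw (h.nonempty.mono h.subset)
  rw [condMea_inter_div_condMea hE.ne' h.subset,
    lt_div_add_iff (add_pos_of_pos_of_nonneg (mea_pos hw ⟨x, hx⟩) (mea_nonneg hw' _))]
  calc t * mea w ((E \ X) ∩ F) < (1 - t) * w x :=
        (h.outweighs x (mem_inter.1 hx).1).anti hw' ht₀ inter_subset_left
    _ ≤ (1 - t) * mea w (X ∩ F) := mul_le_mul_of_nonneg_left (le_mea hw' hx) (sub_nonneg.2 ht₁)

theorem StableFor.subset_or_superset (hw : ∀ ω, 0 < w ω) (ht : 0 ≤ t) {E X : Finset Ω}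
    (h : StableFor (condMea w E) t X) : X ⊆ E ∨ E ⊆ X := by
  by_contra! hcon
  obtain ⟨x, hxX, hxE⟩ := not_subset.1 hcon.1
  obtain ⟨y, hyE, hyX⟩ := not_subset.1 hcon.2
  have hcond : 0 < condMea w E {x, y} :=
    div_pos (mea_pos hw ⟨y, by simp [hyE]⟩) (mea_pos hw ⟨y, hyE⟩)
  have hempty : E ∩ (X ∩ {x, y}) = ∅ := by grind
  have hlt := h.2 {x, y} ⟨x, by simp [hxX]⟩ hcond
  rw [condMea, hempty, mea_empty, zero_div, zero_div] at hlt
  exact hlt.not_ge ht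

theorem isLeastStable_condMea_iff (hw : ∀ ω, 0 < w ω) (ht₀ : 0 ≤ t) (ht₁ : t < 1)
    {E S : Finset Ω} (hE : E.Nonempty) :
    IsLeastStable (condMea w E) t S ↔ IsLeast {X | IsPointwiseStable w t E X} S := by
  constructor
  · intro h
    have hSE : S ⊆ E := h.2 E ((isPointwiseStable_self hw ht₁ hE).stableFor hw ht₀ ht₁.le)
    exact ⟨h.1.isPointwiseStable hw hSE, fun X hX ↦ h.2 X (hX.stableFor hw ht₀ ht₁.le)⟩
  · rintro ⟨hS, hleast⟩
    refine ⟨hS.stableFor hw ht₀ ht₁.le, fun X hX ↦ ?_⟩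
    rcases hX.subset_or_superset hw ht₀ with hXE | hEX
    · exact hleast (hX.isPointwiseStable hw hXE)
    · exact hS.subset.trans hEX

end Stable

section Selection

variable {σ : Finset Ω → Finset Ω}

theorem SelA1.nonempty (h₁ : SelA1 σ) {E : Finset Ω} (hE : E.Nonempty) : (σ E).Nonempty :=
  nonempty_iff_ne_empty.2 fun h ↦ hE.ne_empty (h₁ E h)

theorem SelA1.eq_singleton (h₁ : SelA1 σ) {E : Finset Ω} (hE : E.Nonempty) {a : Ω}
    (h : σ E ⊆ {a}) : σ E = {a} :=
  (h₁.nonempty hE).subset_singleton_iff.1 h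

variable [DecidableEq Ω] {w : Ω → ℝ} {t : ℝ}

/-- `σ` sends every nonempty `E` to the least pointwise stable subset of `E`. For positive weights
this is what `RepresentsAt` amounts to, without conditional measures. -/
structure SelectsLeastStable (w : Ω → ℝ) (t : ℝ) (σ : Finset Ω → Finset Ω) : Prop where
  map_empty : σ ∅ = ∅
  isLeast : ∀ E, E.Nonempty → IsLeast {X | IsPointwiseStable w t E X} (σ E)

/-- The order induced by `σ` agrees with the weights: `a ≻_σ B` exactly when `a` outweighs `B`. -/
def OrderAgrees (w : Ω → ℝ) (t : ℝ) (σ : Finset Ω → Finset Ω) : Prop :=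
  ∀ a B, a ∉ B → (σ (B ∪ {a}) = {a} ↔ Outweighs w t a B)

theorem representsAt_iff_selectsLeastStable (hw : ∀ ω, 0 < w ω) (ht₀ : 0 ≤ t) (ht₁ : t < 1) :
    RepresentsAt w t σ ↔ SelectsLeastStable w t σ := by
  simp only [RepresentsAt, mea_pos_iff hw, mea_eq_zero_iff hw, forall_and, forall_eq]
  have hleast : (∀ E : Finset Ω, E.Nonempty → IsLeastStable (condMea w E) t (σ E)) ↔
      ∀ E, E.Nonempty → IsLeast {X | IsPointwiseStable w t E X} (σ E) :=
    forall₂_congr fun E hE ↦ isLeastStable_condMea_iff hw ht₀ ht₁ hE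
  rw [hleast]
  exact ⟨fun ⟨h, h₀⟩ ↦ ⟨h₀, h⟩, fun ⟨h₀, h⟩ ↦ ⟨h, h₀⟩⟩

theorem SelectsLeastStable.selA1 (h : SelectsLeastStable w t σ) : SelA1 σ := by
  intro X hX
  by_contra hne
  exact (h.isLeast X (nonempty_iff_ne_empty.2 hne)).1.nonempty.ne_empty hX

theorem SelectsLeastStable.selA2 (h : SelectsLeastStable w t σ) : SelA2 σ := by
  intro X
  rcases X.eq_empty_or_nonempty with rfl | hX
  · rw [h.map_empty]
  · exact (h.isLeast X hX).1.subset

theorem SelectsLeastStable.selA3 (h : SelectsLeastStable w t σ) (hw : ∀ ω, 0 ≤ w ω)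
    (ht : 0 ≤ t) : SelA3 σ := by
  intro A B hne
  have hsub : σ A ∩ B ⊆ A ∩ B := inter_subset_inter_right (h.selA2 A)
  have hAB : (A ∩ B).Nonempty := hne.mono hsub
  have hA := (h.isLeast A (hAB.mono inter_subset_left)).1
  exact (h.isLeast _ hAB).2
    ⟨hsub, hne, fun x hx ↦ (hA.outweighs x (mem_inter.1 hx).1).anti hw ht (by grind)⟩

theorem SelectsLeastStable.selA4 (h : SelectsLeastStable w t σ) (hw : ∀ ω, 0 ≤ w ω)
    (ht : 0 ≤ t) : SelA4 σ := by
  intro n A X hX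
  have hXU (i) : X i ⊆ univ.biUnion X := subset_biUnion_of_mem X (mem_univ i)
  rcases (univ.biUnion X).eq_empty_or_nonempty with hU | hU
  · have hX₀ : X 0 = ∅ := subset_empty.1 (hU ▸ hXU 0)
    have hσ := hX 0
    rw [hX₀] at hσ
    rw [hU, hσ]
  · refine (h.isLeast _ (hU.mono subset_union_right)).2 ⟨subset_union_right, hU, fun x hx ↦ ?_⟩
    obtain ⟨i, -, hxi⟩ := mem_biUnion.1 hx
    have hstable := (h.isLeast (A ∪ X i) ⟨x, mem_union_right _ hxi⟩).1
    rw [hX i] at hstable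
    exact (hstable.outweighs x hxi).anti hw ht (by grind)

theorem SelectsLeastStable.orderAgrees (h : SelectsLeastStable w t σ) : OrderAgrees w t σ := by
  intro a B ha
  have hleast := h.isLeast (B ∪ {a}) ⟨a, by simp⟩
  rw [← isPointwiseStable_singleton_iff ha]
  exact ⟨fun hσ ↦ by simpa only [hσ, Set.mem_ofPred_eq] using hleast.1,
    fun hst ↦ hleast.1.nonempty.subset_singleton_iff.1 (hleast.2 hst)⟩

theorem OrderAgrees.isPointwiseStable (hord : OrderAgrees w t σ) (h₁ : SelA1 σ) (h₂ : SelA2 σ)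
    (h₃ : SelA3 σ) {E : Finset Ω} (hE : E.Nonempty) : IsPointwiseStable w t E (σ E) := by
  refine ⟨h₂ E, h₁.nonempty hE, fun x hx ↦ ?_⟩
  rw [← hord x _ (by simp [hx])]
  have hEB : E ∩ (E \ σ E ∪ {x}) = E \ σ E ∪ {x} := by grind [h₂ E hx]
  have hσB : σ E ∩ (E \ σ E ∪ {x}) = {x} := by grind
  have hsub := h₃ E (E \ σ E ∪ {x}) (by rw [hσB]; exact singleton_nonempty x)
  rw [hEB, hσB] at hsub
  exact h₁.eq_singleton ⟨x, by simp⟩ hsub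

theorem OrderAgrees.subset_of_isPointwiseStable (hord : OrderAgrees w t σ) (h₄ : SelA4 σ)
    {E X : Finset Ω} (hX : IsPointwiseStable w t E X) : σ E ⊆ X := by
  obtain ⟨n, hn⟩ := Nat.exists_eq_succ_of_ne_zero hX.nonempty.card_pos.ne'
  let e : Fin (n + 1) ≃ X := (X.equivFinOfCardEq hn).symm
  have hU : univ.biUnion (fun i ↦ {(e i : Ω)}) = X := by
    ext a
    simp only [mem_biUnion, mem_univ, true_and, mem_singleton]
    exact ⟨fun ⟨i, hi⟩ ↦ hi ▸ (e i).2, fun ha ↦ ⟨e.symm ⟨a, ha⟩, by simp⟩⟩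
  have hsub := h₄ n (E \ X) (fun i ↦ {(e i : Ω)}) fun i ↦
    (hord _ _ (by simp)).2 (hX.outweighs _ (e i).2)
  rwa [hU, sdiff_union_of_subset hX.subset] at hsub

theorem representsAt_iff_selA_and_orderAgrees (hw : ∀ ω, 0 < w ω) (ht₀ : 0 ≤ t) (ht₁ : t < 1) :
    RepresentsAt w t σ ↔ SelA1 σ ∧ SelA2 σ ∧ SelA3 σ ∧ SelA4 σ ∧ OrderAgrees w t σ := by
  have hw' : ∀ ω, 0 ≤ w ω := fun ω ↦ (hw ω).le
  rw [representsAt_iff_selectsLeastStable hw ht₀ ht₁]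
  constructor
  · intro h
    exact ⟨h.selA1, h.selA2, h.selA3 hw' ht₀, h.selA4 hw' ht₀, h.orderAgrees⟩
  · rintro ⟨h₁, h₂, h₃, h₄, hord⟩
    exact ⟨subset_empty.1 (h₂ ∅), fun E hE ↦ ⟨hord.isPointwiseStable h₁ h₂ h₃ hE,
      fun _ ↦ hord.subset_of_isPointwiseStable h₄⟩⟩

end Selection

section Scott

variable [DecidableEq Ω] {σ : Finset Ω → Finset Ω} {p q : ℕ} {w : Ω → ℝ}

/-- The axiom (Scott[t]) for `t = p / (p + q)`. -/
def ScottT (σ : Finset Ω → Finset Ω) (p q : ℕ) : Prop :=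
  ∀ n : ℕ, ∀ A B : Fin (n + 1) → Finset Ω, TBalanced σ p q A B →
    (∀ i : Fin n, geStar σ (A i.castSucc) (B i.castSucc)) →
    ¬ StrictIdx σ (A (Fin.last n)) (B (Fin.last n))

/-- The weights respect the order `⪰*_σ`: the inequalities between measures that hold, for
`t = p / (p + q)`, when `A ⪰*_σ B` strictly or weakly. -/
def RespectsOrder (σ : Finset Ω → Finset Ω) (p q : ℕ) (w : Ω → ℝ) : Prop :=
  ∀ A B, (StrictIdx σ A B → p * mea w B < q * mea w A) ∧
    (WeakIdx σ A B → q * mea w B ≤ p * mea w A)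

open Classical in
/-- The coefficients of the linear inequality in the weights that `RespectsOrder` imposes on the
pair `(A, B)`. They are also the contribution of an index with data `(A, B)` to
`t`-balancedness. -/
noncomputable def margin (σ : Finset Ω → Finset Ω) (p q : ℕ) (A B : Finset Ω) (ω : Ω) : ℤ :=
  if StrictIdx σ A B then q * (if ω ∈ A then 1 else 0) - p * (if ω ∈ B then 1 else 0)
  else if WeakIdx σ A B then p * (if ω ∈ A then 1 else 0) - q * (if ω ∈ B then 1 else 0)
  else 0

theorem geStar_iff_strictIdx_or_weakIdx {A B : Finset Ω} :
    geStar σ A B ↔ StrictIdx σ A B ∨ WeakIdx σ A B := by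
  change StrictIdx σ A B ∨ _ ↔ StrictIdx σ A B ∨ ¬StrictIdx σ A B ∧ _
  rw [or_and_left]
  tauto

theorem tBalanced_iff_sum_margin_eq_zero {n : ℕ} {A B : Fin n → Finset Ω} :
    TBalanced σ p q A B ↔ ∑ i, margin σ p q (A i) (B i) = 0 := by
  classical
  have card_eq (C D : Fin n → Prop) :
      (Nat.card {i // C i ∧ D i} : ℤ) = ∑ i, if D i then (if C i then 1 else 0) else 0 := by
    simp [Nat.card_eq_fintype_card, Fintype.card_subtype, ← ite_and, and_comm]
  rw [TBalanced, funext_iff]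
  refine forall_congr' fun ω ↦ ?_
  rw [← Int.natCast_inj]
  push_cast
  rw [card_eq, card_eq, card_eq, card_eq, ← sub_eq_zero, Finset.sum_apply, Pi.zero_apply]
  simp only [mul_sum, ← sum_add_distrib, ← sum_sub_distrib]
  refine Eq.congr_left (sum_congr rfl fun i _ ↦ ?_)
  by_cases hs : StrictIdx σ (A i) (B i)
  · simp [margin, WeakIdx, hs]
  · by_cases hw : WeakIdx σ (A i) (B i) <;> simp [margin, hs, hw]

theorem sum_margin_mul_of_strictIdx [Fintype Ω] {A B : Finset Ω} (h : StrictIdx σ A B)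
    (w : Ω → ℝ) : ∑ ω, (margin σ p q A B ω : ℝ) * w ω = q * mea w A - p * mea w B := by
  simp [margin, h, mea, sub_mul, sum_sub_distrib, ← mul_sum]

theorem sum_margin_mul_of_weakIdx [Fintype Ω] {A B : Finset Ω} (h : WeakIdx σ A B)
    (w : Ω → ℝ) : ∑ ω, (margin σ p q A B ω : ℝ) * w ω = p * mea w A - q * mea w B := by
  simp [margin, h, h.1, mea, sub_mul, sum_sub_distrib, ← mul_sum]

theorem respectsOrder_iff_margin [Fintype Ω] :
    RespectsOrder σ p q w ↔
      (∀ A B, StrictIdx σ A B → 0 < ∑ ω, (margin σ p q A B ω : ℝ) * w ω) ∧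
        ∀ A B, geStar σ A B → 0 ≤ ∑ ω, (margin σ p q A B ω : ℝ) * w ω := by
  constructor
  · intro h
    have hstrict {A B} (hs : StrictIdx σ A B) : 0 < ∑ ω, (margin σ p q A B ω : ℝ) * w ω := by
      rw [sum_margin_mul_of_strictIdx hs]
      exact sub_pos.2 ((h A B).1 hs)
    refine ⟨fun A B ↦ hstrict, fun A B hge ↦ ?_⟩
    rcases geStar_iff_strictIdx_or_weakIdx.1 hge with hs | hw
    · exact (hstrict hs).le
    · rw [sum_margin_mul_of_weakIdx hw]
      exact sub_nonneg.2 ((h A B).2 hw)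
  · rintro ⟨hstrict, hge⟩ A B
    refine ⟨fun hs ↦ ?_, fun hw ↦ ?_⟩
    · simpa only [sum_margin_mul_of_strictIdx hs, sub_pos] using hstrict A B hs
    · simpa only [sum_margin_mul_of_weakIdx hw, sub_nonneg] using
        hge A B (geStar_iff_strictIdx_or_weakIdx.2 (.inr hw))

theorem RespectsOrder.scottT [Finite Ω] (h : RespectsOrder σ p q w) : ScottT σ p q := by
  cases nonempty_fintype Ω
  obtain ⟨hstrict, hge⟩ := respectsOrder_iff_margin.1 h
  intro n A B hbal hAB hlast
  have hsum : ∑ i, ∑ ω, (margin σ p q (A i) (B i) ω : ℝ) * w ω = 0 := by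
    rw [sum_comm]
    refine sum_eq_zero fun ω _ ↦ ?_
    have hω := congrFun (tBalanced_iff_sum_margin_eq_zero.1 hbal) ω
    rw [Finset.sum_apply, Pi.zero_apply] at hω
    rw [← sum_mul, ← Int.cast_sum, hω, Int.cast_zero, zero_mul]
  rw [Fin.sum_univ_castSucc] at hsum
  exact hsum.not_gt (add_pos_of_nonneg_of_pos (sum_nonneg fun i _ ↦ hge _ _ (hAB i))
    (hstrict _ _ hlast))

theorem ScottT.eq_zero_of_sum_nsmul_margin_eq_zero {ι : Type*} [Fintype ι] (h : ScottT σ p q)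
    {A B : ι → Finset Ω} (hge : ∀ i, geStar σ (A i) (B i)) {m : ι → ℕ}
    (hm : ∑ i, m i • margin σ p q (A i) (B i) = 0) {i : ι} (hi : StrictIdx σ (A i) (B i)) :
    m i = 0 := by
  by_contra hmi
  obtain ⟨n, s, hlast, hs⟩ :=
    exists_fin_sum_comp_eq_sum_nsmul (fun j ↦ margin σ p q (A j) (B j)) hmi
  exact h n (A ∘ s) (B ∘ s) (tBalanced_iff_sum_margin_eq_zero.2 (hs.trans hm)) (fun k ↦ hge _)
    (by simpa [hlast] using hi)

theorem ScottT.exists_respectsOrder [Finite Ω] (h : ScottT σ p q) :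
    ∃ w : Ω → ℝ, RespectsOrder σ p q w := by
  cases nonempty_fintype Ω
  cases nonempty_fintype {P : Finset Ω × Finset Ω // geStar σ P.1 P.2}
  obtain ⟨w, hge, hstrict⟩ := exists_forall_sum_nonneg_and_pos
    (v := fun P : {P : Finset Ω × Finset Ω // geStar σ P.1 P.2} ↦ margin σ p q P.1.1 P.1.2)
    (S := {P | StrictIdx σ P.1.1 P.1.2})
    fun m hm P hP ↦ h.eq_zero_of_sum_nsmul_margin_eq_zero (fun P ↦ P.2) hm hP
  refine ⟨fun ω ↦ w ω, respectsOrder_iff_margin.2 ⟨fun A B hs ↦ ?_, fun A B hAB ↦ ?_⟩⟩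
  · exact mod_cast hstrict ⟨(A, B), .inl hs⟩ hs
  · exact mod_cast hge ⟨(A, B), hAB⟩

theorem OrderAgrees.respectsOrder (hw : ∀ ω, 0 ≤ w ω) (hq : 0 < q) (hqp : q ≤ p)
    (h : OrderAgrees w (p / (p + q)) σ) : RespectsOrder σ p q w := by
  have hqp' : (q : ℝ) ≤ p := mod_cast hqp
  refine fun A B ↦ ⟨?_, ?_⟩
  · rintro ⟨a, rfl, haB, ha⟩
    rwa [mea_singleton, ← outweighs_div_add_iff (by positivity), ← h a B haB]
  · rintro ⟨-, b, rfl, hb⟩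
    rw [mea_singleton]
    by_cases hbA : b ∈ A
    · exact mul_le_mul hqp' (le_mea hw hbA) (hw b) (by positivity)
    · have := hb.resolve_left hbA
      rwa [Ne, h b A hbA, outweighs_div_add_iff (by positivity), not_lt] at this

theorem RespectsOrder.orderAgrees (hw : ∀ ω, 0 ≤ w ω) (hq : 0 < q) (hqp : q ≤ p)
    (h : RespectsOrder σ p q w) : OrderAgrees w (p / (p + q)) σ := by
  intro a B ha
  rw [outweighs_div_add_iff (by positivity)]
  refine ⟨fun hσ ↦ by simpa using (h {a} B).1 ⟨a, rfl, ha, hσ⟩, fun hlt ↦ ?_⟩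
  by_contra hσ
  have hqp' : (q : ℝ) ≤ p := mod_cast hqp
  by_cases hs : StrictIdx σ B {a}
  · have hlt' := (h B {a}).1 hs
    rw [mea_singleton] at hlt'
    exact lt_irrefl _ <| calc p * w a < q * mea w B := hlt'
      _ ≤ p * mea w B := mul_le_mul_of_nonneg_right hqp' (mea_nonneg hw B)
      _ < q * w a := hlt
      _ ≤ p * w a := mul_le_mul_of_nonneg_right hqp' (hw a)
  · have hle := (h B {a}).2 ⟨hs, a, rfl, .inr hσ⟩
    rw [mea_singleton] at hle
    exact hle.not_gt hlt

theorem RespectsOrder.pos (h : RespectsOrder σ p q w) (h₁ : SelA1 σ) (h₂ : SelA2 σ) (a : Ω) :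
    0 < w a := by
  have hσ : σ (∅ ∪ {a}) = {a} := h₁.eq_singleton (by simp) (by simpa using h₂ {a})
  have hlt := (h {a} ∅).1 ⟨a, rfl, notMem_empty a, hσ⟩
  rw [mea_empty, mea_singleton, mul_zero] at hlt
  exact pos_of_mul_pos_right hlt q.cast_nonneg

theorem RespectsOrder.div {c : ℝ} (h : RespectsOrder σ p q w) (hc : 0 < c) :
    RespectsOrder σ p q fun ω ↦ w ω / c := by
  have hmea (X : Finset Ω) : mea (fun ω ↦ w ω / c) X = mea w X / c := (sum_div ..).symm
  intro A B
  simpa only [hmea, ← mul_div_assoc, div_lt_div_iff_of_pos_right hc,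
    div_le_div_iff_of_pos_right hc] using h A B

theorem ScottT.exists_isProbWeight_respectsOrder [Fintype Ω] [Nonempty Ω] (h : ScottT σ p q)
    (h₁ : SelA1 σ) (h₂ : SelA2 σ) : ∃ w : Ω → ℝ, IsProbWeight w ∧ RespectsOrder σ p q w := by
  obtain ⟨w, hw⟩ := h.exists_respectsOrder
  have hpos := hw.pos h₁ h₂
  have hsum : 0 < ∑ ω, w ω := sum_pos (fun ω _ ↦ hpos ω) univ_nonempty
  refine ⟨fun ω ↦ w ω / ∑ ω', w ω', ⟨fun ω ↦ (div_pos (hpos ω) hsum).le, ?_⟩, hw.div hsum⟩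
  rw [← sum_div, div_self hsum.ne']

end Scott

/-- Representation theorem for rational thresholds, Theorem `GENREPSEL`:
for a rational threshold `t = p/(p+q) ∈ [1/2, 1)`, a selection function is represented by
some regular probability measure for threshold `t` iff it satisfies (S1), (S2), (S3), (S4ₙ)
and the axiom (Scott[t]). -/
theorem stmt19 [Fintype Ω] [DecidableEq Ω] [Nonempty Ω]
    (σ : Finset Ω → Finset Ω) (p q : ℕ) (hp : 0 < p) (hq : 0 < q)
    (t : ℝ) (ht : t = (p : ℝ) / ((p : ℝ) + (q : ℝ)))
    (ht0 : 1 / 2 ≤ t) (ht1 : t < 1) :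
    (∃ w : Ω → ℝ, IsProbWeight w ∧ RegularW w ∧ RepresentsAt w t σ) ↔
      (SelA1 σ ∧ SelA2 σ ∧ SelA3 σ ∧ SelA4 σ ∧
        (∀ n : ℕ, ∀ A B : Fin (n + 1) → Finset Ω, TBalanced σ p q A B →
          (∀ i : Fin n, geStar σ (A i.castSucc) (B i.castSucc)) →
          ¬ StrictIdx σ (A (Fin.last n)) (B (Fin.last n)))) := by
  have hq' : (0 : ℝ) < p + q := by positivity
  have ht₀ : 0 ≤ t := by linarith
  have hqp : q ≤ p := by
    rw [ht, div_le_div_iff₀ two_pos hq'] at ht0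
    exact_mod_cast (by linarith : (q : ℝ) ≤ p)
  constructor
  · rintro ⟨w, ⟨hw, -⟩, hreg, hrep⟩
    have hpos := (regularW_iff_forall_pos hw).1 hreg
    obtain ⟨h₁, h₂, h₃, h₄, hord⟩ :=
      (representsAt_iff_selA_and_orderAgrees hpos ht₀ ht1).1 hrep
    rw [ht] at hord
    exact ⟨h₁, h₂, h₃, h₄, (hord.respectsOrder hw hq hqp).scottT⟩
  · rintro ⟨h₁, h₂, h₃, h₄, hscott⟩
    obtain ⟨w, hprob, hresp⟩ := ScottT.exists_isProbWeight_respectsOrder hscott h₁ h₂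
    have hpos := hresp.pos h₁ h₂
    have hord := hresp.orderAgrees hprob.1 hq hqp
    rw [← ht] at hord
    exact ⟨w, hprob, (regularW_iff_forall_pos hprob.1).2 hpos,
      (representsAt_iff_selA_and_orderAgrees hpos ht₀ ht1).2 ⟨h₁, h₂, h₃, h₄, hord⟩⟩
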